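/- Let ⟨G, Eℓ⟩ be a two-player game graph with live edges and let R = {(G_1, R_1), …, (G_k, R_k)} be a Rabin condition with index set P = {1, …, k}. With p_0 := 0, G_{p_0} := ∅ and R_{p_0} := ∅, define Z* := νY_{p_0}. μX_{p_0}. ⋃_{p_1 ∈ P} νY_{p_1}. μX_{p_1}. ⋃_{p_2 ∈ P∖{p_1}} νY_{p_2}. μX_{p_2}. ⋯ ⋃_{p_k ∈ P∖{p_1,…,p_{k−1}}} νY_{p_k}. μX_{p_k}. ⋃_{j=0}^{k} C_{p_j}, where C_{p_j} := ( ⋂_{i=0}^{j} (V ∖ R_{p_i}) ) ∩ [ (G_{p_j} ∩ Cpre(Y_{p_j})) ∪ Apre(Y_{p_j}, X_{p_j}) ] (the innermost body along a branch of permutation choices p_1 … p_k depends on all bound variables Y_{p_0}, X_{p_0}, …, Y_{p_k}, X_{p_k}). Then Z* equals the winning region W of Player 0 in the fair adversarial game over ⟨G, Eℓ⟩ for the Rabin winning condition φ = ⋁_{j∈P} ( ◇□(V∖R_j) ∧ □◇G_j ). Moreover, there exists a memoryless Player-0 strategy that wins the fair adversarial game for φ from every vertex of Z*. -/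

import Mathlib

/-- Least fixed point of a set transformer (Knaster–Tarski form). -/
def lfpSet {V : Type*} (f : Set V → Set V) : Set V := sInf {X | f X ⊆ X}

/-- Greatest fixed point of a set transformer (Knaster–Tarski form). -/
def gfpSet {V : Type*} (f : Set V → Set V) : Set V := sSup {X | X ⊆ f X}

/-- A two-player game graph with live edges: vertices are partitioned into
Player-0 vertices `V0` and Player-1 vertices `V1`, every vertex has a successor,
and live edges `El` are Player-1 edges. -/
structure LiveGameGraph (V : Type*) where
  V0 : Set V
  V1 : Set V
  E : V → V → Prop
  El : V → V → Prop
  cover : V0 ∪ V1 = Set.univ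
  disj : V0 ∩ V1 = ∅
  succ_nonempty : ∀ v : V, ∃ w, E v w
  live_sub : ∀ v w, El v w → v ∈ V1 ∧ E v w

namespace LiveGameGraph

variable {V : Type*}

/-- Pre∃0(S) -/
def pre0 (Gm : LiveGameGraph V) (S : Set V) : Set V :=
  {v | v ∈ Gm.V0 ∧ ∃ w, Gm.E v w ∧ w ∈ S}

/-- Pre∀1(S) -/
def pre1 (Gm : LiveGameGraph V) (S : Set V) : Set V :=
  {v | v ∈ Gm.V1 ∧ ∀ w, Gm.E v w → w ∈ S}

/-- Cpre(S) -/
def cpre (Gm : LiveGameGraph V) (S : Set V) : Set V := Gm.pre0 S ∪ Gm.pre1 S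

/-- Lpre∃(T) -/
def lpre (Gm : LiveGameGraph V) (T : Set V) : Set V :=
  {v | ∃ w, Gm.El v w ∧ w ∈ T}

/-- Apre(S,T) -/
def apre (Gm : LiveGameGraph V) (S T : Set V) : Set V :=
  Gm.cpre T ∪ (Gm.lpre T ∩ Gm.pre1 S)

end LiveGameGraph

namespace LiveGameGraph

variable {V : Type*}

/-- A play is strongly transition fair if every live edge whose source is visited
infinitely often is itself taken infinitely often. -/
def StronglyFair (Gm : LiveGameGraph V) (π : ℕ → V) : Prop :=
  ∀ v w, Gm.El v w → {i | π i = v}.Infinite → {i | π i = v ∧ π (i + 1) = w}.Infinite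

/-- A Player-0 strategy: given the history (the prefix before the current vertex)
and the current vertex, it chooses an `E`-successor whenever the current vertex
belongs to Player 0. -/
def Strategy0 (Gm : LiveGameGraph V) (ρ : List V → V → V) : Prop :=
  ∀ h v, v ∈ Gm.V0 → Gm.E v (ρ h v)

/-- A Player-1 strategy. -/
def Strategy1 (Gm : LiveGameGraph V) (ρ : List V → V → V) : Prop :=
  ∀ h v, v ∈ Gm.V1 → Gm.E v (ρ h v)

/-- The play compliant with the strategies `ρ0` and `ρ1` starting at `v0`. -/
def Compliant (Gm : LiveGameGraph V) (ρ0 ρ1 : List V → V → V) (v0 : V)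
    (π : ℕ → V) : Prop :=
  π 0 = v0 ∧ ∀ i : ℕ,
    (π i ∈ Gm.V0 → π (i + 1) = ρ0 (List.ofFn fun j : Fin i => π j.1) (π i)) ∧
    (π i ∈ Gm.V1 → π (i + 1) = ρ1 (List.ofFn fun j : Fin i => π j.1) (π i))

/-- Player 0 wins the fair adversarial game for the winning condition `φ`
from `v0` using the strategy `ρ0`. -/
def WinsFrom (Gm : LiveGameGraph V) (φ : (ℕ → V) → Prop)
    (ρ0 : List V → V → V) (v0 : V) : Prop :=
  Gm.Strategy0 ρ0 ∧ ∀ ρ1, Gm.Strategy1 ρ1 → ∀ π, Gm.Compliant ρ0 ρ1 v0 π →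
    (Gm.StronglyFair π → φ π)

/-- The winning region of Player 0 in the fair adversarial game for `φ`. -/
def WinningRegion (Gm : LiveGameGraph V) (φ : (ℕ → V) → Prop) : Set V :=
  {v0 | ∃ ρ0, Gm.WinsFrom φ ρ0 v0}

end LiveGameGraph

namespace LiveGameGraph

variable {V : Type*}

/-- The nested permutation-based Rabin fixpoint, recursively peeling off one
permutation index at a time.  `avail` is the set of still-unchosen pair indices,
`Qcur` is the intersection ⋂ R̄ over the already-chosen prefix, and `acc` is the
union of the `C` terms of the already-chosen prefix (with their bound `Y`/`X`
values substituted in). -/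
def rabinAux (Gm : LiveGameGraph V) (Gp Rp : ℕ → Set V) :
    ℕ → Finset ℕ → Set V → Set V → Set V
  | 0, _, _, acc => acc
  | n + 1, avail, Qcur, acc =>
      ⋃ p ∈ avail,
        gfpSet fun Y => lfpSet fun X =>
          Gm.rabinAux Gp Rp n (avail.erase p) (Qcur ∩ (Rp p)ᶜ)
            (acc ∪ ((Qcur ∩ (Rp p)ᶜ) ∩ ((Gp p ∩ Gm.cpre Y) ∪ Gm.apre Y X)))

/-- The full permutation-based Rabin fixpoint Z* for pairs (G_1,R_1),…,(G_k,R_k),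
with the artificial pair p_0 = 0, G_0 = ∅, R_0 = ∅ handled by the outermost
νY_0. μX_0. -/
def rabinZ (Gm : LiveGameGraph V) (Gp Rp : ℕ → Set V) (k : ℕ) : Set V :=
  gfpSet fun Y0 => lfpSet fun X0 =>
    Gm.rabinAux Gp Rp k (Finset.Icc 1 k) ((∅ : Set V)ᶜ)
      (((∅ : Set V)ᶜ) ∩ (((∅ : Set V) ∩ Gm.cpre Y0) ∪ Gm.apre Y0 X0))

end LiveGameGraph

namespace LiveGameGraph

open Filter

variable {V : Type*}

/-! ### Fixed points and monotonicity -/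

theorem lfpSet_mono {f g : Set V → Set V} (h : ∀ X, f X ⊆ g X) : lfpSet f ⊆ lfpSet g := by
  intro v hv X hX
  exact hv X ((h X).trans hX)

theorem gfpSet_mono {f g : Set V → Set V} (h : ∀ X, f X ⊆ g X) : gfpSet f ⊆ gfpSet g := by
  rintro v ⟨X, hX, hv⟩
  exact ⟨X, hX.trans (h X), hv⟩

theorem lfpSet_eq {f : Set V → Set V} (hf : Monotone f) : f (lfpSet f) = lfpSet f := by
  have h1 : f (lfpSet f) ⊆ lfpSet f := by
    intro v hv X hX
    exact hX (hf (show lfpSet f ⊆ X from fun w hw => hw X hX) hv)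
  exact Set.Subset.antisymm h1 (fun v hv => hv _ (hf h1))

theorem gfpSet_eq {f : Set V → Set V} (hf : Monotone f) : f (gfpSet f) = gfpSet f := by
  have h1 : gfpSet f ⊆ f (gfpSet f) := by
    rintro v ⟨X, hX, hv⟩
    exact hf (show X ⊆ gfpSet f from fun w hw => ⟨X, hX, hw⟩) (hX hv)
  exact Set.Subset.antisymm (fun v hv => ⟨_, hf h1, hv⟩) h1

theorem cpre_mono (Gm : LiveGameGraph V) {S T : Set V} (h : S ⊆ T) : Gm.cpre S ⊆ Gm.cpre T := by
  rintro v (⟨h0, w, hw, hS⟩ | ⟨h1, hS⟩)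
  · exact Or.inl ⟨h0, w, hw, h hS⟩
  · exact Or.inr ⟨h1, fun w hw => h (hS w hw)⟩

theorem apre_mono (Gm : LiveGameGraph V) {S S' T T' : Set V} (h : S ⊆ S') (h' : T ⊆ T') :
    Gm.apre S T ⊆ Gm.apre S' T' := by
  rintro v (hv | ⟨⟨w, hw, hT⟩, ⟨h1, hS⟩⟩)
  · exact Or.inl (Gm.cpre_mono h' hv)
  · exact Or.inr ⟨⟨w, hw, h' hT⟩, ⟨h1, fun w hw => h (hS w hw)⟩⟩

theorem apre_sub_cpre (Gm : LiveGameGraph V) {S T : Set V} (h : T ⊆ S) :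
    Gm.apre S T ⊆ Gm.cpre S := by
  rintro v (hv | ⟨_, hv⟩)
  · exact Gm.cpre_mono h hv
  · exact Or.inr hv

/-- The accumulated set after one more level. -/
def accN (Gm : LiveGameGraph V) (Q acc Gs Y X : Set V) : Set V :=
  acc ∪ (Q ∩ ((Gs ∩ Gm.cpre Y) ∪ Gm.apre Y X))

theorem accN_mono (Gm : LiveGameGraph V) {Q acc acc' Gs Y Y' X X' : Set V}
    (ha : acc ⊆ acc') (hY : Y ⊆ Y') (hX : X ⊆ X') :
    Gm.accN Q acc Gs Y X ⊆ Gm.accN Q acc' Gs Y' X' := by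
  rintro v (hv | ⟨hQ, ⟨hG, hv⟩ | hv⟩)
  · exact Or.inl (ha hv)
  · exact Or.inr ⟨hQ, Or.inl ⟨hG, Gm.cpre_mono hY hv⟩⟩
  · exact Or.inr ⟨hQ, Or.inr (Gm.apre_mono hY hX hv)⟩

/-- One level of the fixpoint. -/
def lvl (Gm : LiveGameGraph V) (Gp Rp : ℕ → Set V) (n : ℕ) (avail : Finset ℕ)
    (Q acc Gs : Set V) : Set V :=
  gfpSet fun Y => lfpSet fun X => Gm.rabinAux Gp Rp n avail Q (Gm.accN Q acc Gs Y X)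

theorem rabinAux_succ (Gm : LiveGameGraph V) (Gp Rp : ℕ → Set V) (n : ℕ) (avail : Finset ℕ)
    (Q acc : Set V) : Gm.rabinAux Gp Rp (n + 1) avail Q acc =
      ⋃ p ∈ avail, Gm.lvl Gp Rp n (avail.erase p) (Q ∩ (Rp p)ᶜ) acc (Gp p) := rfl

theorem mem_rabinAux_succ (Gm : LiveGameGraph V) (Gp Rp : ℕ → Set V) (n : ℕ) (avail : Finset ℕ)
    (Q acc : Set V) (v : V) : v ∈ Gm.rabinAux Gp Rp (n + 1) avail Q acc ↔
      ∃ p ∈ avail, v ∈ Gm.lvl Gp Rp n (avail.erase p) (Q ∩ (Rp p)ᶜ) acc (Gp p) := by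
  rw [rabinAux_succ]; simp

theorem rabinAux_mono (Gm : LiveGameGraph V) (Gp Rp : ℕ → Set V) (n : ℕ) :
    ∀ (avail : Finset ℕ) (Q : Set V), Monotone (Gm.rabinAux Gp Rp n avail Q) := by
  induction n with
  | zero => intro avail Q a b h; exact h
  | succ n ih =>
    intro avail Q a b h v hv
    rw [mem_rabinAux_succ] at hv ⊢
    obtain ⟨p, hp, hv⟩ := hv
    refine ⟨p, hp, gfpSet_mono (fun Y => lfpSet_mono fun X => ?_) hv⟩
    exact ih _ _ (Gm.accN_mono h le_rfl le_rfl)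

theorem step_mono (Gm : LiveGameGraph V) (Gp Rp : ℕ → Set V) (n : ℕ) (avail : Finset ℕ)
    (Q acc Gs Y : Set V) :
    Monotone fun X => Gm.rabinAux Gp Rp n avail Q (Gm.accN Q acc Gs Y X) := by
  intro a b h
  exact Gm.rabinAux_mono Gp Rp n _ _ (Gm.accN_mono le_rfl le_rfl h)

theorem lvl_eq_lfp (Gm : LiveGameGraph V) (Gp Rp : ℕ → Set V) (n : ℕ) (avail : Finset ℕ)
    (Q acc Gs : Set V) :
    (lfpSet fun X => Gm.rabinAux Gp Rp n avail Q
      (Gm.accN Q acc Gs (Gm.lvl Gp Rp n avail Q acc Gs) X)) = Gm.lvl Gp Rp n avail Q acc Gs := by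
  apply gfpSet_eq (f := fun Y => lfpSet fun X => Gm.rabinAux Gp Rp n avail Q
      (Gm.accN Q acc Gs Y X))
  intro a b h
  exact lfpSet_mono fun X => Gm.rabinAux_mono Gp Rp n _ _ (Gm.accN_mono le_rfl h le_rfl)

theorem lvl_eq_aux (Gm : LiveGameGraph V) (Gp Rp : ℕ → Set V) (n : ℕ) (avail : Finset ℕ)
    (Q acc Gs : Set V) :
    Gm.rabinAux Gp Rp n avail Q
      (Gm.accN Q acc Gs (Gm.lvl Gp Rp n avail Q acc Gs) (Gm.lvl Gp Rp n avail Q acc Gs))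
      = Gm.lvl Gp Rp n avail Q acc Gs := by
  have h := lfpSet_eq (Gm.step_mono Gp Rp n avail Q acc Gs (Gm.lvl Gp Rp n avail Q acc Gs))
  rw [lvl_eq_lfp] at h
  exact h

theorem rabinAux_sub (Gm : LiveGameGraph V) (Gp Rp : ℕ → Set V) (n : ℕ) :
    ∀ (avail : Finset ℕ) (Q acc : Set V), Gm.rabinAux Gp Rp n avail Q acc ⊆
      acc ∪ (Q ∩ Gm.cpre (Gm.rabinAux Gp Rp n avail Q acc)) := by
  induction n with
  | zero => intro avail Q acc v hv; exact Or.inl hv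
  | succ n ih =>
    intro avail Q acc v hv
    obtain ⟨p, hp, hv⟩ := (Gm.mem_rabinAux_succ ..).1 hv
    have hU : Gm.lvl Gp Rp n (avail.erase p) (Q ∩ (Rp p)ᶜ) acc (Gp p) ⊆
        Gm.rabinAux Gp Rp (n + 1) avail Q acc := by
      intro w hw
      exact (Gm.mem_rabinAux_succ ..).2 ⟨p, hp, hw⟩
    have h2 := hv
    rw [← lvl_eq_aux] at h2
    have h3 := ih _ _ _ h2
    rw [lvl_eq_aux] at h3
    rcases h3 with (h3 | ⟨hQ, ⟨_, h3⟩ | h3⟩) | ⟨hQ, h3⟩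
    · exact Or.inl h3
    · exact Or.inr ⟨hQ.1, Gm.cpre_mono hU h3⟩
    · exact Or.inr ⟨hQ.1, Gm.cpre_mono hU (Gm.apre_sub_cpre le_rfl h3)⟩
    · exact Or.inr ⟨hQ.1, Gm.cpre_mono hU h3⟩

theorem acc_sub_rabinAux (Gm : LiveGameGraph V) (Gp Rp : ℕ → Set V) (n : ℕ) :
    ∀ (avail : Finset ℕ) (Q acc : Set V), avail.card = n →
      acc ⊆ Gm.rabinAux Gp Rp n avail Q acc := by
  induction n with
  | zero => intro avail Q acc _ v hv; exact hv
  | succ n ih =>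
    intro avail Q acc hc v hv
    obtain ⟨p, hp⟩ : avail.Nonempty := by
      rw [← Finset.card_pos]; omega
    refine (Gm.mem_rabinAux_succ ..).2 ⟨p, hp, acc, ?_, hv⟩
    intro w hw X hX
    refine hX (ih _ _ _ ?_ (Or.inl hw))
    rw [Finset.card_erase_of_mem hp]; omega

/-! ### Plays -/

/-- The Rabin condition over the index set `avail`. -/
def Rab (Gp Rp : ℕ → Set V) (avail : Finset ℕ) (π : ℕ → V) : Prop :=
  ∃ j ∈ avail, (∀ᶠ i in atTop, π i ∉ Rp j) ∧ ∃ᶠ i in atTop, π i ∈ Gp j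

theorem freq_shift {P : ℕ → Prop} (n : ℕ) :
    (∃ᶠ i in atTop, P (i + n)) ↔ ∃ᶠ i in atTop, P i := by
  conv_rhs => rw [← map_add_atTop_eq_nat n]
  rw [frequently_map]

theorem even_shift {P : ℕ → Prop} (n : ℕ) :
    (∀ᶠ i in atTop, P (i + n)) ↔ ∀ᶠ i in atTop, P i := by
  conv_rhs => rw [← map_add_atTop_eq_nat n]
  rw [eventually_map]

theorem Rab_shift (Gp Rp : ℕ → Set V) (avail : Finset ℕ) (π : ℕ → V) (n : ℕ) :
    Rab Gp Rp avail (fun i => π (i + n)) ↔ Rab Gp Rp avail π := by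
  unfold Rab
  have h1 := fun j => even_shift (P := fun i => π i ∉ Rp j) n
  have h2 := fun j => freq_shift (P := fun i => π i ∈ Gp j) n
  simp only [h1, h2]

theorem fair_iff (Gm : LiveGameGraph V) (π : ℕ → V) : Gm.StronglyFair π ↔
    ∀ v w, Gm.El v w → (∃ᶠ i in atTop, π i = v) → ∃ᶠ i in atTop, π i = v ∧ π (i + 1) = w := by
  unfold StronglyFair
  simp only [Nat.frequently_atTop_iff_infinite]

theorem fair_shift (Gm : LiveGameGraph V) (π : ℕ → V) (n : ℕ) :
    Gm.StronglyFair (fun i => π (i + n)) ↔ Gm.StronglyFair π := by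
  rw [fair_iff, fair_iff]
  have h1 := fun v => freq_shift (P := fun i => π i = v) n
  have h2 := fun v w => freq_shift (P := fun i => π i = v ∧ π (i + 1) = w) n
  have e : ∀ i, i + 1 + n = i + n + 1 := fun i => by omega
  simp only [e, h1, h2]

theorem not_V0_of_V1 (Gm : LiveGameGraph V) {v : V} (h : v ∈ Gm.V1) : v ∉ Gm.V0 := by
  intro h0
  have : v ∈ Gm.V0 ∩ Gm.V1 := ⟨h0, h⟩
  rw [Gm.disj] at this
  exact this

theorem V0_or_V1 (Gm : LiveGameGraph V) (v : V) : v ∈ Gm.V0 ∨ v ∈ Gm.V1 := by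
  have : v ∈ Gm.V0 ∪ Gm.V1 := by rw [Gm.cover]; trivial
  exact this

/-- Step `i` of `f` is legal and respects the Player-0 strategy. -/
def StepOK (Gm : LiveGameGraph V) (ρ : List V → V → V) (f : ℕ → V) (i : ℕ) : Prop :=
  Gm.E (f i) (f (i + 1)) ∧
    (f i ∈ Gm.V0 → f (i + 1) = ρ (List.ofFn fun j : Fin i => f j.1) (f i))

theorem StepOK.congr {Gm : LiveGameGraph V} {ρ : List V → V → V} {f g : ℕ → V} {i : ℕ}
    (h : Gm.StepOK ρ f i) (hfg : ∀ j ≤ i + 1, g j = f j) : Gm.StepOK ρ g i := by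
  unfold StepOK at *
  have e : (fun j : Fin i => g j.1) = fun j : Fin i => f j.1 := by
    funext j; exact hfg _ (by omega)
  rw [e, hfg i (by omega), hfg (i + 1) le_rfl]
  exact h

/-- Player 0 wins for `ψ` from `v` (formulated with plays). -/
def PWin (Gm : LiveGameGraph V) (ψ : (ℕ → V) → Prop) (ρ : List V → V → V) (v : V) : Prop :=
  Gm.Strategy0 ρ ∧ ∀ π : ℕ → V, π 0 = v → (∀ i, Gm.StepOK ρ π i) → Gm.StronglyFair π → ψ π

theorem winsFrom_iff (Gm : LiveGameGraph V) (ψ : (ℕ → V) → Prop) (ρ : List V → V → V) (v : V) :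
    Gm.WinsFrom ψ ρ v ↔ Gm.PWin ψ ρ v := by
  classical
  constructor
  · rintro ⟨hρ, h⟩
    refine ⟨hρ, fun π h0 hs hf => ?_⟩
    choose s hs' using Gm.succ_nonempty
    refine h (fun l v => if Gm.E v (π (l.length + 1)) then π (l.length + 1) else s v) ?_ π
      ⟨h0, fun i => ⟨(hs i).2, fun _ => ?_⟩⟩ hf
    · intro l v _
      dsimp only
      split_ifs with hc
      · exact hc
      · exact hs' v
    · simp [(hs i).1]
  · rintro ⟨hρ, h⟩
    refine ⟨hρ, fun ρ1 h1 π hc hf => h π hc.1 (fun i => ⟨?_, (hc.2 i).1⟩) hf⟩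
    rcases Gm.V0_or_V1 (π i) with h0 | h0
    · rw [(hc.2 i).1 h0]; exact hρ _ _ h0
    · rw [(hc.2 i).2 h0]; exact h1 _ _ h0

/-- Concatenation of a finite prefix and a play. -/
def cat (f : ℕ → V) (n : ℕ) (π : ℕ → V) : ℕ → V := fun i => if i < n then f i else π (i - n)

/-- Residual strategy. -/
def res (ρ : List V → V → V) (f : ℕ → V) (n : ℕ) : List V → V → V :=
  fun h v => ρ ((List.ofFn fun j : Fin n => f j.1) ++ h) v

theorem cat_add (f : ℕ → V) (n : ℕ) (π : ℕ → V) (i : ℕ) : cat f n π (i + n) = π i := by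
  simp [cat]

theorem cat_le {f : ℕ → V} {n : ℕ} {π : ℕ → V} (h : π 0 = f n) {i : ℕ} (hi : i ≤ n) :
    cat f n π i = f i := by
  unfold cat
  split_ifs with hc
  · rfl
  · obtain rfl : i = n := by omega
    simpa using h

theorem cat_step (Gm : LiveGameGraph V) {ρ : List V → V → V} {f : ℕ → V} {n : ℕ} {π : ℕ → V}
    (h : π 0 = f n) (hf : ∀ i < n, Gm.StepOK ρ f i) (hπ : ∀ i, Gm.StepOK (res ρ f n) π i) (i : ℕ) :
    Gm.StepOK ρ (cat f n π) i := by
  by_cases hi : i < n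
  · exact (hf i hi).congr fun j hj => cat_le h (by omega)
  · obtain ⟨k, rfl⟩ : ∃ k, i = k + n := ⟨i - n, by omega⟩
    have := hπ k
    unfold StepOK at *
    have e : k + n + 1 = (k + 1) + n := by omega
    rw [e, cat_add, cat_add]
    refine ⟨this.1, fun h0 => ?_⟩
    rw [this.2 h0]
    unfold res
    congr 1
    apply List.ext_getElem
    · simp; omega
    · intro m h1 h2
      simp only [List.getElem_append, List.length_ofFn, List.getElem_ofFn, cat]
      split_ifs <;> rfl

/-! ### Building fair plays -/

theorem exists_enum (T : Type*) [Countable T] [Nonempty T] :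
    ∃ e : ℕ → T, ∀ t, ∃ᶠ i in atTop, e i = t := by
  obtain ⟨f, hf⟩ := exists_surjective_nat T
  refine ⟨fun i => f (Nat.unpair i).1, fun t => ?_⟩
  rw [frequently_atTop]
  intro N
  obtain ⟨k, hk⟩ := hf t
  exact ⟨Nat.pair k N, Nat.right_le_pair k N, by simp [hk]⟩

/-- `(f, n)` is a legal prefix inside `A`. -/
def IsPfx (Gm : LiveGameGraph V) (ρ : List V → V → V) (A : Set V) (v0 : V)
    (x : (ℕ → V) × ℕ) : Prop :=
  x.1 0 = v0 ∧ (∀ i < x.2, Gm.StepOK ρ x.1 i) ∧ ∀ i ≤ x.2, x.1 i ∈ A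

theorem IsPfx.snoc {Gm : LiveGameGraph V} {ρ : List V → V → V} {A : Set V} {v0 : V}
    {x : (ℕ → V) × ℕ} (hx : Gm.IsPfx ρ A v0 x) {w : V} (hw : w ∈ A) (hE : Gm.E (x.1 x.2) w)
    (h0 : x.1 x.2 ∈ Gm.V0 → w = ρ (List.ofFn fun j : Fin x.2 => x.1 j.1) (x.1 x.2)) :
    ∃ g : ℕ → V, Gm.IsPfx ρ A v0 (g, x.2 + 1) ∧ (∀ i ≤ x.2, g i = x.1 i) ∧ g (x.2 + 1) = w := by
  obtain ⟨f, n⟩ := x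
  obtain ⟨h1, h2, h3⟩ := hx
  dsimp only at *
  have hg : ∀ i ≤ n, (fun i => if i ≤ n then f i else w) i = f i := fun i hi => by simp [hi]
  have hg' : (fun i => if i ≤ n then f i else w) (n + 1) = w := by simp
  generalize (fun i => if i ≤ n then f i else w) = g at hg hg'
  refine ⟨g, ⟨?_, ?_, ?_⟩, hg, hg'⟩
  · dsimp only; rw [hg 0 (by omega), h1]
  · intro i hi
    dsimp only at hi ⊢
    rcases Nat.lt_or_ge i n with h | h
    · exact (h2 i h).congr fun j hj => hg j (by omega)
    · obtain rfl : i = n := by omega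
      unfold StepOK
      have e : (fun j : Fin i => g j.1) = fun j : Fin i => f j.1 := by
        funext j; exact hg _ (by omega)
      rw [e, hg i le_rfl, hg']
      exact ⟨hE, h0⟩
  · intro i hi
    dsimp only at hi ⊢
    rcases Nat.lt_or_ge n i with h | h
    · obtain rfl : i = n + 1 := by omega
      rw [hg']; exact hw
    · rw [hg i h]; exact h3 i h

theorem build [Finite V] (Gm : LiveGameGraph V) (Rp : ℕ → Set V) (ρ : List V → V → V)
    (A : Set V) (v0 : V) (avail : Finset ℕ) (hv0 : v0 ∈ A)
    (hlive : ∀ a b, a ∈ A → Gm.El a b → b ∈ A)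
    (hstep : ∀ x, Gm.IsPfx ρ A v0 x → ∃ w ∈ A, Gm.E (x.1 x.2) w ∧
      (x.1 x.2 ∈ Gm.V0 → w = ρ (List.ofFn fun j : Fin x.2 => x.1 j.1) (x.1 x.2)))
    (hreach : ∀ q ∈ avail, ∀ x, Gm.IsPfx ρ A v0 x → ∃ y, Gm.IsPfx ρ A v0 y ∧
      x.2 ≤ y.2 ∧ (∀ i ≤ x.2, y.1 i = x.1 i) ∧ y.1 y.2 ∈ Rp q) :
    ∃ π : ℕ → V, π 0 = v0 ∧ (∀ i, Gm.StepOK ρ π i) ∧ (∀ i, π i ∈ A) ∧ Gm.StronglyFair π ∧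
      ∀ q ∈ avail, ∃ᶠ i in atTop, π i ∈ Rp q := by
  classical
  let P := {x : (ℕ → V) × ℕ // Gm.IsPfx ρ A v0 x}
  let ext : P → P → Prop := fun x y => x.1.2 < y.1.2 ∧ ∀ i ≤ x.1.2, y.1.1 i = x.1.1 i
  let D : (V × V) ⊕ ℕ → P → P → Prop := fun t x y =>
    match t with
    | Sum.inl (a, b) => Gm.El a b → (∃ i, x.1.2 ≤ i ∧ i < y.1.2 ∧ y.1.1 i = a ∧ y.1.1 (i + 1) = b) ∨
        ¬ ∃ z : P, ext x z ∧ z.1.1 z.1.2 = a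
    | Sum.inr q => q ∈ avail → ∃ i, x.1.2 ≤ i ∧ i ≤ y.1.2 ∧ y.1.1 i ∈ Rp q
  have hst : ∀ x : P, ∃ y : P, ext x y := by
    rintro ⟨x, hx⟩
    obtain ⟨w, hw, hE, h0⟩ := hstep x hx
    obtain ⟨g, hg, h1, h2⟩ := hx.snoc hw hE h0
    exact ⟨⟨_, hg⟩, Nat.lt_succ_self _, h1⟩
  have hD : ∀ t (x : P), ∃ y : P, ext x y ∧ D t x y := by
    rintro (⟨a, b⟩ | q) x
    · by_cases hab : Gm.El a b
      · by_cases hz : ∃ z : P, ext x z ∧ z.1.1 z.1.2 = a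
        · obtain ⟨z, hxz, hza⟩ := hz
          obtain ⟨hV1, hE⟩ := Gm.live_sub a b hab
          have haA : a ∈ A := hza ▸ z.2.2.2 _ le_rfl
          obtain ⟨g, hg, h1, h2⟩ := z.2.snoc (w := b) (hlive a b haA hab) (by rw [hza]; exact hE)
            (by rw [hza]; intro h; exact absurd h (Gm.not_V0_of_V1 hV1))
          refine ⟨⟨_, hg⟩, ⟨?_, ?_⟩, ?_⟩
          · exact hxz.1.trans (Nat.lt_succ_self _)
          · intro i hi
            exact (h1 i (hi.trans hxz.1.le)).trans (hxz.2 i hi)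
          · intro _
            left
            exact ⟨z.1.2, hxz.1.le, Nat.lt_succ_self _, (h1 _ le_rfl).trans hza, h2⟩
        · obtain ⟨y, hy⟩ := hst x
          exact ⟨y, hy, fun _ => Or.inr hz⟩
      · obtain ⟨y, hy⟩ := hst x
        exact ⟨y, hy, fun h => absurd h hab⟩
    · by_cases hq : q ∈ avail
      · obtain ⟨y, hy, hxy, h1, h2⟩ := hreach q hq x.1 x.2
        obtain ⟨z, hz1, hz2⟩ := hst ⟨y, hy⟩
        refine ⟨z, ⟨lt_of_le_of_lt hxy hz1, ?_⟩, fun _ => ⟨y.2, hxy, hz1.le, ?_⟩⟩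
        · intro i hi
          exact (hz2 i (hi.trans hxy)).trans (h1 i hi)
        · rw [hz2 _ le_rfl]; exact h2
      · obtain ⟨y, hy⟩ := hst x
        exact ⟨y, hy, fun h => absurd h hq⟩
  choose nxt hnxt hnxtD using hD
  obtain ⟨e, he⟩ := exists_enum ((V × V) ⊕ ℕ)
  let x0 : P := ⟨(fun _ => v0, 0), rfl, fun i hi => absurd hi (Nat.not_lt_zero _), fun _ _ => hv0⟩
  let s : ℕ → P := fun i => Nat.rec x0 (fun i x => nxt (e i) x) i
  have hs : ∀ i, s (i + 1) = nxt (e i) (s i) := fun i => rfl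
  have hext : ∀ i, ext (s i) (s (i + 1)) := fun i => by rw [hs]; exact hnxt _ _
  have hlen : ∀ i, i ≤ (s i).1.2 := by
    intro i
    induction i with
    | zero => exact Nat.zero_le _
    | succ i ih => exact Nat.succ_le_of_lt (lt_of_le_of_lt ih (hext i).1)
  have hagree : ∀ i k, (s i).1.2 ≤ (s (i + k)).1.2 ∧
      ∀ j ≤ (s i).1.2, (s (i + k)).1.1 j = (s i).1.1 j := by
    intro i k
    induction k with
    | zero => exact ⟨le_rfl, fun _ _ => rfl⟩
    | succ k ih =>
      have := hext (i + k)
      refine ⟨ih.1.trans this.1.le, fun j hj => ?_⟩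
      exact (this.2 j (hj.trans ih.1)).trans (ih.2 j hj)
  let π : ℕ → V := fun i => (s i).1.1 i
  have hπ : ∀ i, ∀ j ≤ (s i).1.2, π j = (s i).1.1 j := by
    intro i j hj
    rcases le_total i j with h | h
    · obtain ⟨k, rfl⟩ := Nat.exists_eq_add_of_le h
      exact (hagree i k).2 _ hj
    · obtain ⟨k, rfl⟩ := Nat.exists_eq_add_of_le h
      exact ((hagree j k).2 j (hlen j)).symm
  have hstepπ : ∀ i, Gm.StepOK ρ π i := by
    intro i
    refine ((s (i + 1)).2.2.1 i ?_).congr fun j hj => hπ (i + 1) j (hj.trans (hlen (i + 1)))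
    exact hlen (i + 1)
  have hA : ∀ i, π i ∈ A := fun i => (s i).2.2.2 i (hlen i)
  refine ⟨π, rfl, hstepπ, hA, ?_, ?_⟩
  · rw [fair_iff]
    intro a b hab hfr
    rw [frequently_atTop] at hfr ⊢
    intro N
    obtain ⟨i, hi, hei⟩ := frequently_atTop.1 (he (Sum.inl (a, b))) N
    have hd := hnxtD (e i) (s i)
    rw [← hs, hei] at hd
    rcases hd hab with ⟨j, hj1, hj2, hj3, hj4⟩ | hno
    · refine ⟨j, hi.trans ((hlen i).trans hj1), ?_, ?_⟩
      · rw [hπ (i + 1) j hj2.le]; exact hj3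
      · rw [hπ (i + 1) (j + 1) hj2]; exact hj4
    · exfalso
      apply hno
      obtain ⟨m, hm, hma⟩ := hfr ((s i).1.2 + 1)
      exact ⟨⟨(π, m), rfl, fun i _ => hstepπ i, fun i _ => hA i⟩, ⟨hm, fun j hj => hπ i j hj⟩, hma⟩
  · intro q hq
    rw [frequently_atTop]
    intro N
    obtain ⟨i, hi, hei⟩ := frequently_atTop.1 (he (Sum.inr q)) N
    have hd := hnxtD (e i) (s i)
    rw [← hs, hei] at hd
    obtain ⟨j, hj1, hj2, hj3⟩ := hd hq
    refine ⟨j, hi.trans ((hlen i).trans hj1), ?_⟩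
    rw [hπ (i + 1) j hj2]; exact hj3

theorem exists_fair [Finite V] (Gm : LiveGameGraph V) (ρ : List V → V → V)
    (hρ : Gm.Strategy0 ρ) (v : V) :
    ∃ π : ℕ → V, π 0 = v ∧ (∀ i, Gm.StepOK ρ π i) ∧ Gm.StronglyFair π := by
  obtain ⟨π, h1, h2, _, h3, _⟩ := Gm.build (fun _ => ∅) ρ Set.univ v ∅ trivial
    (fun _ _ _ _ => trivial) (fun x _ => by
      rcases Gm.V0_or_V1 (x.1 x.2) with h | h
      · exact ⟨_, trivial, hρ _ _ h, fun _ => rfl⟩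
      · obtain ⟨w, hw⟩ := Gm.succ_nonempty (x.1 x.2)
        exact ⟨w, trivial, hw, fun h0 => absurd h0 (Gm.not_V0_of_V1 h)⟩)
    (fun q hq => by simp at hq)
  exact ⟨π, h1, h2, h3⟩

/-! ### Completeness -/

/-- The objective attached to a level. -/
def Obj (Gp Rp : ℕ → Set V) (avail : Finset ℕ) (Q acc Gs : Set V) (π : ℕ → V) : Prop :=
  (∃ i, π i ∈ acc ∧ ∀ j < i, π j ∈ Q) ∨
    ((∀ i, π i ∈ Q) ∧ ((∃ᶠ i in atTop, π i ∈ Gs) ∨ Rab Gp Rp avail π))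

theorem win_res (Gm : LiveGameGraph V) {Gp Rp : ℕ → Set V} {avail : Finset ℕ}
    {Q acc Gs : Set V} {ρ : List V → V → V} {v : V}
    (h : Gm.PWin (Obj Gp Rp avail Q acc Gs) ρ v) {f : ℕ → V} {n : ℕ} (h0 : f 0 = v)
    (hf : ∀ i < n, Gm.StepOK ρ f i) (hacc : ∀ i < n, f i ∉ acc) :
    Gm.PWin (Obj Gp Rp avail Q acc Gs) (res ρ f n) (f n) := by
  refine ⟨fun l v hv => h.1 _ _ hv, fun π hπ hs hfair => ?_⟩
  have e : (fun i => cat f n π (i + n)) = π := by funext i; exact cat_add ..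
  have key := h.2 (cat f n π) (by rw [cat_le hπ (Nat.zero_le _), h0]) (Gm.cat_step hπ hf hs)
    (by rw [← Gm.fair_shift _ n, e]; exact hfair)
  rcases key with ⟨i, hi, hQ⟩ | ⟨hQ, hG⟩
  · have hin : n ≤ i := by
      by_contra hc
      push Not at hc
      rw [cat_le hπ hc.le] at hi
      exact hacc i hc hi
    obtain ⟨k, rfl⟩ : ∃ k, i = k + n := ⟨i - n, by omega⟩
    rw [cat_add] at hi
    refine Or.inl ⟨k, hi, fun j hj => ?_⟩
    have := hQ (j + n) (by omega)
    rwa [cat_add] at this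
  · refine Or.inr ⟨fun i => ?_, ?_⟩
    · have := hQ (i + n)
      rwa [cat_add] at this
    · rw [← freq_shift n, ← Rab_shift Gp Rp avail _ n, e] at hG
      simpa only [cat_add] using hG

theorem complete [Finite V] (Gm : LiveGameGraph V) (Gp Rp : ℕ → Set V) (n : ℕ) :
    ∀ (avail : Finset ℕ) (Q acc Gs : Set V), avail.card = n → ∀ v ρ,
      Gm.PWin (Obj Gp Rp avail Q acc Gs) ρ v → v ∈ Gm.lvl Gp Rp n avail Q acc Gs := by
  induction n using Nat.strong_induction_on with
  | _ n ih =>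
  intro avail Q acc Gs hc v ρ hwin
  set H : Set V := {v | ∃ ρ, Gm.PWin (Obj Gp Rp avail Q acc Gs) ρ v} with hH
  refine ⟨H, ?_, ρ, hwin⟩
  clear hwin v ρ
  show H ⊆ lfpSet fun X => Gm.rabinAux Gp Rp n avail Q (Gm.accN Q acc Gs H X)
  have hX := lfpSet_eq (Gm.step_mono Gp Rp n avail Q acc Gs H)
  set X := lfpSet fun X => Gm.rabinAux Gp Rp n avail Q (Gm.accN Q acc Gs H X) with hXdef
  have hXacc : X ⊆ Gm.accN Q acc Gs H X := by
    intro v hv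
    rw [← hX] at hv
    have := Gm.rabinAux_sub Gp Rp n _ _ _ hv
    rw [hX] at this
    rcases this with h | ⟨hQ, h⟩
    · exact h
    · exact Or.inr ⟨hQ, Or.inr (Or.inl h)⟩
  have haccX : Gm.accN Q acc Gs H X ⊆ X := by
    have := Gm.acc_sub_rabinAux Gp Rp n avail Q (Gm.accN Q acc Gs H X) hc
    rwa [hX] at this
  -- basic facts on `H`
  have F1 : ∀ v ∈ H, v ∉ acc → v ∈ Q := by
    rintro v ⟨ρ, hρ⟩ hv
    obtain ⟨π, h0, hs, hf⟩ := Gm.exists_fair ρ hρ.1 v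
    rcases hρ.2 π h0 hs hf with ⟨i, hi, hQ⟩ | ⟨hQ, _⟩
    · rcases Nat.eq_zero_or_pos i with rfl | hpos
      · rw [h0] at hi; exact absurd hi hv
      · rw [← h0]; exact hQ 0 hpos
    · rw [← h0]; exact hQ 0
  have Fs : ∀ v ∈ H, v ∉ acc → ∀ ρ, Gm.PWin (Obj Gp Rp avail Q acc Gs) ρ v → ∀ w, Gm.E v w →
      (v ∈ Gm.V0 → w = ρ [] v) → w ∈ H := by
    intro v _ hv ρ hρ w hE hw
    have := Gm.win_res hρ (f := fun i => if i = 0 then v else w) (n := 1) (by simp)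
      (by
        intro i hi
        obtain rfl : i = 0 := by omega
        refine ⟨by simpa using hE, ?_⟩
        simpa using hw)
      (by
        intro i hi
        obtain rfl : i = 0 := by omega
        simpa using hv)
    exact ⟨_, by simpa using this⟩
  have F2 : ∀ v ∈ H, v ∉ acc → v ∈ Gm.V1 → ∀ w, Gm.E v w → w ∈ H := by
    intro v hvH hv h1 w hE
    obtain ⟨ρ, hρ⟩ := id hvH
    exact Fs v hvH hv ρ hρ w hE fun h0 => absurd h0 (Gm.not_V0_of_V1 h1)
  have F3 : ∀ v ∈ H, v ∉ acc → v ∈ Gm.cpre H := by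
    intro v hvH hv
    rcases Gm.V0_or_V1 v with h0 | h1
    · obtain ⟨ρ, hρ⟩ := id hvH
      exact Or.inl ⟨h0, ρ [] v, hρ.1 _ _ h0, Fs v hvH hv ρ hρ _ (hρ.1 _ _ h0) fun _ => rfl⟩
    · exact Or.inr ⟨h1, F2 v hvH hv h1⟩
  by_contra hcon
  rw [Set.not_subset] at hcon
  obtain ⟨v0, hv0H, hv0X⟩ := hcon
  obtain ⟨ρ, hρ⟩ := id hv0H
  have A1 : ∀ v ∈ H \ X, v ∉ acc := fun v hv h => hv.2 (haccX (Or.inl h))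
  have A2 : ∀ v ∈ H \ X, v ∈ Q := fun v hv => F1 v hv.1 (A1 v hv)
  have A3 : ∀ v ∈ H \ X, v ∉ Gs := fun v hv h =>
    hv.2 (haccX (Or.inr ⟨A2 v hv, Or.inl ⟨h, F3 v hv.1 (A1 v hv)⟩⟩))
  have A4 : ∀ v ∈ H \ X, v ∉ Gm.apre H X := fun v hv h =>
    hv.2 (haccX (Or.inr ⟨A2 v hv, Or.inr h⟩))
  -- prefixes inside `A` step into `H`
  have PF : ∀ (f : ℕ → V) (m : ℕ), f 0 = v0 → (∀ i ≤ m, Gm.StepOK ρ f i) →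
      (∀ i ≤ m, f i ∈ H \ X) → f (m + 1) ∈ H := by
    intro f m h0 hs hA
    exact ⟨_, Gm.win_res hρ (f := f) (n := m + 1) h0 (fun i hi => hs i (by omega))
      (fun i hi => A1 _ (hA i (by omega)))⟩
  have hlive : ∀ a b, a ∈ H \ X → Gm.El a b → b ∈ H \ X := by
    intro a b ha hab
    obtain ⟨h1, hE⟩ := Gm.live_sub a b hab
    have hall := F2 a ha.1 (A1 a ha) h1
    exact ⟨hall b hE, fun hb => A4 a ha (Or.inr ⟨⟨b, hab, hb⟩, ⟨h1, hall⟩⟩)⟩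
  have hstep : ∀ x, Gm.IsPfx ρ (H \ X) v0 x → ∃ w ∈ H \ X, Gm.E (x.1 x.2) w ∧
      (x.1 x.2 ∈ Gm.V0 → w = ρ (List.ofFn fun j : Fin x.2 => x.1 j.1) (x.1 x.2)) := by
    intro x hx
    have hu := hx.2.2 x.2 le_rfl
    rcases Gm.V0_or_V1 (x.1 x.2) with h0 | h1
    · have hE := hρ.1 (List.ofFn fun j : Fin x.2 => x.1 j.1) _ h0
      refine ⟨_, ⟨?_, ?_⟩, hE, fun _ => rfl⟩
      · have hx' : Gm.IsPfx ρ Set.univ v0 x := ⟨hx.1, hx.2.1, fun _ _ => trivial⟩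
        obtain ⟨g, hg, hg1, hg2⟩ := hx'.snoc trivial hE (fun _ => rfl)
        rw [← hg2]
        refine PF g x.2 hg.1 (fun i hi => hg.2.1 i (Nat.lt_succ_of_le hi)) fun i hi => ?_
        rw [hg1 i hi]; exact hx.2.2 i hi
      · intro hX'
        exact A4 _ hu (Or.inl (Or.inl ⟨h0, _, hE, hX'⟩))
    · have : ∃ w, Gm.E (x.1 x.2) w ∧ w ∉ X := by
        by_contra hno
        push Not at hno
        exact A4 _ hu (Or.inl (Or.inr ⟨h1, hno⟩))
      obtain ⟨w, hE, hw⟩ := this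
      exact ⟨w, ⟨F2 _ hu.1 (A1 _ hu) h1 w hE, hw⟩, hE,
        fun h0 => absurd h0 (Gm.not_V0_of_V1 h1)⟩
  have hreach : ∀ q ∈ avail, ∀ x, Gm.IsPfx ρ (H \ X) v0 x → ∃ y, Gm.IsPfx ρ (H \ X) v0 y ∧
      x.2 ≤ y.2 ∧ (∀ i ≤ x.2, y.1 i = x.1 i) ∧ y.1 y.2 ∈ Rp q := by
    rintro q hq ⟨f, m⟩ hx
    have hxs := hx.2.1
    have hxA := hx.2.2
    have hx0 := hx.1
    dsimp only at hxs hxA hx0 ⊢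
    have hu := hxA m le_rfl
    obtain ⟨n', rfl⟩ : ∃ n', n = n' + 1 := by
      have : 0 < avail.card := Finset.card_pos.2 ⟨q, hq⟩
      exact ⟨n - 1, by omega⟩
    have hnl : f m ∉ Gm.lvl Gp Rp n' (avail.erase q) (Q ∩ (Rp q)ᶜ) (Gm.accN Q acc Gs H X) (Gp q) := by
      intro h
      apply hu.2
      rw [← hX]
      exact (Gm.mem_rabinAux_succ ..).2 ⟨q, hq, h⟩
    have hnw : ¬ Gm.PWin (Obj Gp Rp (avail.erase q) (Q ∩ (Rp q)ᶜ) (Gm.accN Q acc Gs H X) (Gp q))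
        (res ρ f m) (f m) := by
      intro h
      exact hnl (ih n' (Nat.lt_succ_self _) _ _ _ _
        (by rw [Finset.card_erase_of_mem hq]; omega) _ _ h)
    have : ∃ π : ℕ → V, π 0 = f m ∧ (∀ i, Gm.StepOK (res ρ f m) π i) ∧ Gm.StronglyFair π ∧
        ¬ Obj Gp Rp (avail.erase q) (Q ∩ (Rp q)ᶜ) (Gm.accN Q acc Gs H X) (Gp q) π := by
      by_contra hno
      push Not at hno
      exact hnw ⟨fun l v hv => hρ.1 _ _ hv, hno⟩
    obtain ⟨π, hπ0, hπs, hπf, hπn⟩ := this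
    have e : (fun i => cat f m π (i + m)) = π := by funext i; exact cat_add ..
    have hgs := Gm.cat_step hπ0 hxs hπs
    have hg0 : cat f m π 0 = v0 := by rw [cat_le hπ0 (Nat.zero_le _), hx0]
    have hgf : Gm.StronglyFair (cat f m π) := by rw [← Gm.fair_shift _ m, e]; exact hπf
    have hgA : ∀ i, (∀ j ≤ i, π j ∈ H \ X) → ∀ j ≤ i + m, cat f m π j ∈ H \ X := by
      intro i hi j hj
      rcases le_total j m with h | h
      · rw [cat_le hπ0 h]; exact hxA j h
      · obtain ⟨k, rfl⟩ : ∃ k, j = k + m := ⟨j - m, by omega⟩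
        rw [cat_add]; exact hi k (by omega)
    have hex : ∃ i, π i ∈ Rp q ∧ ∀ j ≤ i, π j ∈ H \ X := by
      by_contra hno
      push Not at hno
      have hall : ∀ i, ∀ j ≤ i, π j ∈ H \ X := by
        intro i
        induction i with
        | zero =>
          intro j hj
          obtain rfl : j = 0 := by omega
          rw [hπ0]; exact hu
        | succ i ihi =>
          intro j hj
          rcases Nat.lt_or_ge i j with h | h
          · obtain rfl : j = i + 1 := by omega
            refine ⟨?_, fun hXi => ?_⟩
            · have := PF (cat f m π) (i + m) hg0 (fun k _ => hgs k) (hgA i ihi)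
              have e2 : i + m + 1 = (i + 1) + m := by omega
              rwa [e2, cat_add] at this
            · apply hπn
              refine Or.inl ⟨i + 1, hXacc hXi, fun k hk => ⟨A2 _ (ihi k (by omega)), fun hR => ?_⟩⟩
              obtain ⟨l, hl, hl'⟩ := hno k hR
              exact hl' (ihi l (by omega))
          · exact ihi j h
      have hall' : ∀ i, π i ∈ H \ X := fun i => hall i i le_rfl
      have hnR : ∀ i, π i ∉ Rp q := by
        intro i hR
        obtain ⟨l, _, hl'⟩ := hno i hR
        exact hl' (hall' l)
      have hgA' : ∀ i, cat f m π i ∈ H \ X :=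
        fun i => hgA i (hall i) i (by omega)
      apply hπn
      refine Or.inr ⟨fun i => ⟨A2 _ (hall' i), hnR i⟩, ?_⟩
      rcases hρ.2 _ hg0 hgs hgf with ⟨i, hi, _⟩ | ⟨_, hG | hR⟩
      · exact absurd hi (A1 _ (hgA' i))
      · obtain ⟨i, hi⟩ := hG.exists
        exact absurd hi (A3 _ (hgA' i))
      · rw [← Rab_shift Gp Rp avail _ m, e] at hR
        obtain ⟨j, hj, h1, h2⟩ := hR
        by_cases hjq : j = q
        · subst hjq; exact Or.inl h2
        · exact Or.inr ⟨j, Finset.mem_erase.2 ⟨hjq, hj⟩, h1, h2⟩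
    obtain ⟨i, hiR, hiA⟩ := hex
    refine ⟨(cat f m π, i + m), ⟨hg0, fun k _ => hgs k, hgA i hiA⟩, Nat.le_add_left _ _,
      fun j hj => cat_le hπ0 hj, ?_⟩
    dsimp only
    rw [cat_add]; exact hiR
  obtain ⟨π, h0, hs, hA, hf, hR⟩ := Gm.build Rp ρ (H \ X) v0 avail ⟨hv0H, hv0X⟩ hlive hstep hreach
  rcases hρ.2 π h0 hs hf with ⟨i, hi, _⟩ | ⟨_, hG | ⟨j, hj, h1, _⟩⟩
  · exact A1 _ (hA i) hi
  · obtain ⟨i, hi⟩ := hG.exists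
    exact A3 _ (hA i) hi
  · obtain ⟨i, hi, hi'⟩ := ((hR j hj).and_eventually h1).exists
    exact hi' hi

/-! ### Soundness -/

/-- Memoryless soundness certificate for a region `B` with exit set `acc`. -/
def Snd (Gm : LiveGameGraph V) (B acc Q : Set V) (Φ : (ℕ → V) → Prop) : Prop :=
  ∃ σ : V → V,
    (∀ v ∈ B, v ∉ acc → v ∈ Q ∧ (v ∈ Gm.V0 → Gm.E v (σ v) ∧ σ v ∈ B) ∧
      (v ∈ Gm.V1 → ∀ w, Gm.E v w → w ∈ B)) ∧
    ∀ π : ℕ → V, Gm.StronglyFair π → (∀ i, Gm.E (π i) (π (i + 1))) →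
      (∀ i, π i ∈ B ∧ π i ∉ acc) → (∀ i, π i ∈ Gm.V0 → π (i + 1) = σ (π i)) → Φ π

theorem liminf_nat (g : ℕ → ℕ) (M : ℕ) (hM : ∀ i, g i ≤ M) :
    ∃ m, (∃ᶠ i in atTop, g i = m) ∧ ∀ᶠ i in atTop, m ≤ g i := by
  classical
  have hex : ∃ m, ∃ᶠ i in atTop, g i ≤ m := ⟨M, (Eventually.of_forall hM).frequently⟩
  have h1 := Nat.find_spec hex
  have h2 : ∀ᶠ i in atTop, Nat.find hex ≤ g i := by
    rcases Nat.eq_zero_or_pos (Nat.find hex) with h | h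
    · rw [h]; exact Eventually.of_forall fun _ => Nat.zero_le _
    · have := Nat.find_min hex (m := Nat.find hex - 1) (by omega)
      rw [not_frequently] at this
      filter_upwards [this] with i hi
      omega
  refine ⟨Nat.find hex, ?_, h2⟩
  exact (h1.and_eventually h2).mono fun i hi => le_antisymm hi.1 hi.2

theorem pigeon [Finite V] (π : ℕ → V) (P : V → Prop) (h : ∃ᶠ i in atTop, P (π i)) :
    ∃ v, P v ∧ ∃ᶠ i in atTop, π i = v := by
  by_contra hno
  push Not at hno
  have : ∀ v, ∀ᶠ i in atTop, P v → π i ≠ v := by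
    intro v
    by_cases hv : P v
    · have := hno v hv
      filter_upwards [this] with i hi _ using hi
    · exact Eventually.of_forall fun i h => absurd h hv
  rw [← eventually_all] at this
  obtain ⟨i, hi, hi'⟩ := (h.and_eventually this).exists
  exact hi' _ hi rfl

theorem exists_rank [Finite V] {f : Set V → Set V} (hf : Monotone f) :
    ∃ (a : ℕ → Set V) (rank : V → ℕ), (∀ r, a (r + 1) = f (a r)) ∧ (∀ r, a r ⊆ lfpSet f) ∧
      (∀ v ∈ lfpSet f, v ∈ a (rank v + 1)) ∧ ∀ r v, v ∈ a r → rank v < r := by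
  classical
  let a : ℕ → Set V := fun r => f^[r] ∅
  have ha : ∀ r, a (r + 1) = f (a r) := fun r => Function.iterate_succ_apply' f r ∅
  have hmono : Monotone a := by
    apply monotone_nat_of_le_succ
    intro r
    induction r with
    | zero => exact Set.empty_subset _
    | succ r ih => rw [ha r, ha (r + 1)]; exact hf ih
  have hsub : ∀ r, a r ⊆ lfpSet f := by
    intro r
    induction r with
    | zero => exact Set.empty_subset _
    | succ r ih => rw [ha r, ← lfpSet_eq hf]; exact hf ih
  obtain ⟨N, hN⟩ := WellFoundedGT.monotone_chain_condition ⟨a, hmono⟩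
  have hN' : a N = a (N + 1) := hN (N + 1) (Nat.le_succ _)
  have hfull : ∀ v ∈ lfpSet f, v ∈ a (N + 1) := by
    intro v hv
    rw [← hN']
    exact hv _ (by show f (a N) ⊆ a N; rw [← ha, ← hN'])
  refine ⟨a, fun v => sInf {r | v ∈ a (r + 1)}, ha, hsub, fun v hv => ?_, fun r v hv => ?_⟩
  · exact Nat.sInf_mem (s := {r | v ∈ a (r + 1)}) ⟨N, hfull v hv⟩
  · cases r with
    | zero => exact absurd hv (Set.notMem_empty v)
    | succ r => exact Nat.lt_succ_of_le (Nat.sInf_le hv)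

theorem aux_of_lvl [Finite V] (Gm : LiveGameGraph V) (Gp Rp : ℕ → Set V) (n : ℕ)
    (ih : ∀ (avail : Finset ℕ) (Q acc Gs : Set V), Gm.Snd (Gm.lvl Gp Rp n avail Q acc Gs) acc Q
      (fun π => (∃ᶠ i in atTop, π i ∈ Gs) ∨ Rab Gp Rp avail π))
    (avail : Finset ℕ) (Q acc : Set V) :
    Gm.Snd (Gm.rabinAux Gp Rp (n + 1) avail Q acc) acc Q (Rab Gp Rp avail) := by
  classical
  choose τ hτ1 hτ2 using fun q => ih (avail.erase q) (Q ∩ (Rp q)ᶜ) acc (Gp q)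
  set L : ℕ → Set V := fun q => Gm.lvl Gp Rp n (avail.erase q) (Q ∩ (Rp q)ᶜ) acc (Gp q) with hL
  let qq : V → ℕ := fun v => sInf {q | q ∈ avail ∧ v ∈ L q}
  have hB : ∀ v, v ∈ Gm.rabinAux Gp Rp (n + 1) avail Q acc ↔ ∃ q ∈ avail, v ∈ L q :=
    fun v => Gm.mem_rabinAux_succ ..
  have hqq : ∀ v ∈ Gm.rabinAux Gp Rp (n + 1) avail Q acc, qq v ∈ avail ∧ v ∈ L (qq v) := by
    intro v hv
    obtain ⟨q, hq⟩ := (hB v).1 hv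
    exact Nat.sInf_mem (s := {q | q ∈ avail ∧ v ∈ L q}) ⟨q, hq⟩
  refine ⟨fun v => τ (qq v) v, ?_, ?_⟩
  · intro v hv hacc
    obtain ⟨h1, h2⟩ := hqq v hv
    obtain ⟨hQ, h0, h3⟩ := hτ1 _ v h2 hacc
    exact ⟨hQ.1, fun h => ⟨(h0 h).1, (hB _).2 ⟨_, h1, (h0 h).2⟩⟩,
      fun h w hw => (hB _).2 ⟨_, h1, h3 h w hw⟩⟩
  · intro π hf hE hin hσ
    dsimp only at hσ
    have hdec : ∀ i, qq (π (i + 1)) ≤ qq (π i) := by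
      intro i
      obtain ⟨h1, h2⟩ := hqq _ (hin i).1
      obtain ⟨_, h0, h3⟩ := hτ1 _ _ h2 (hin i).2
      refine Nat.sInf_le ⟨h1, ?_⟩
      rcases Gm.V0_or_V1 (π i) with h | h
      · rw [hσ i h]; exact (h0 h).2
      · exact h3 h _ (hE i)
    have hanti : Antitone fun i => qq (π i) := antitone_nat_of_succ_le hdec
    obtain ⟨q, hq1, hq2⟩ := liminf_nat (fun i => qq (π i)) (qq (π 0)) fun i => hanti (Nat.zero_le i)
    obtain ⟨N, hN⟩ := hq1.exists
    have hq3 : ∀ i, qq (π (i + N)) = q := by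
      intro i
      apply le_antisymm
      · rw [← hN]; exact hanti (Nat.le_add_left _ _)
      · obtain ⟨j, hj, hj'⟩ := (hq2.and (eventually_ge_atTop (i + N))).exists
        exact hj.trans (hanti hj')
    have hqa : q ∈ avail := by rw [← hq3 0]; exact (hqq _ (hin _).1).1
    have hinL : ∀ i, π (i + N) ∈ L q := by
      intro i
      have := (hqq _ (hin (i + N)).1).2
      rwa [hq3] at this
    have := hτ2 q (fun i => π (i + N)) ((Gm.fair_shift π N).2 hf)
      (fun i => by
        have := hE (i + N)
        have e : i + 1 + N = i + N + 1 := by omega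
        rwa [e])
      (fun i => ⟨hinL i, (hin _).2⟩)
      (fun i h => by
        have e : i + 1 + N = i + N + 1 := by omega
        have := hσ (i + N) h
        rw [hq3] at this
        rw [e]; exact this)
    rw [← Rab_shift Gp Rp avail π N]
    rcases this with h | ⟨j, hj, h⟩
    · exact ⟨q, hqa, Eventually.of_forall fun i => (hτ1 q _ (hinL i) (hin _).2).1.2, h⟩
    · exact ⟨j, (Finset.mem_erase.1 hj).2, h⟩

theorem lvl_of_aux [Finite V] (Gm : LiveGameGraph V) (Gp Rp : ℕ → Set V) (n : ℕ)
    (ih : ∀ (avail : Finset ℕ) (Q acc : Set V), Gm.Snd (Gm.rabinAux Gp Rp n avail Q acc) acc Q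
      (Rab Gp Rp avail))
    (avail : Finset ℕ) (Q acc Gs : Set V) : Gm.Snd (Gm.lvl Gp Rp n avail Q acc Gs) acc Q
      (fun π => (∃ᶠ i in atTop, π i ∈ Gs) ∨ Rab Gp Rp avail π) := by
  classical
  have hUeq := Gm.lvl_eq_lfp Gp Rp n avail Q acc Gs
  set U := Gm.lvl Gp Rp n avail Q acc Gs with hU
  obtain ⟨a, rank, ha, haU, hrank, hlt⟩ := exists_rank (Gm.step_mono Gp Rp n avail Q acc Gs U)
  rw [hUeq] at haU hrank
  choose τ hτ1 hτ2 using fun r => ih avail Q (Gm.accN Q acc Gs U (a r))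
  simp only [← ha] at hτ1 hτ2
  let c : V → V := fun v =>
    if h : ∃ w, Gm.E v w ∧ w ∈ a (rank v) then h.choose
    else if h : ∃ w, Gm.E v w ∧ w ∈ U then h.choose else v
  have hc1 : ∀ v, (∃ w, Gm.E v w ∧ w ∈ a (rank v)) → Gm.E v (c v) ∧ c v ∈ a (rank v) := by
    intro v h
    simp only [c, dif_pos h]
    exact h.choose_spec
  have hc2 : ∀ v, (∃ w, Gm.E v w ∧ w ∈ U) → Gm.E v (c v) ∧ c v ∈ U := by
    intro v h
    by_cases h' : ∃ w, Gm.E v w ∧ w ∈ a (rank v)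
    · exact ⟨(hc1 v h').1, haU _ (hc1 v h').2⟩
    · simp only [c, dif_neg h', dif_pos h]
      exact h.choose_spec
  refine ⟨fun v => if v ∈ Gm.accN Q acc Gs U (a (rank v)) then c v else τ (rank v) v, ?_, ?_⟩
  · intro v hv hacc
    dsimp only
    split_ifs with hin
    · rcases hin with h | ⟨hQ, h⟩
      · exact absurd h hacc
      have hcp : v ∈ Gm.cpre U := by
        rcases h with ⟨_, h⟩ | h
        · exact h
        · exact Gm.apre_sub_cpre (haU _) h
      refine ⟨hQ, fun h0 => hc2 v ?_, fun h1 => ?_⟩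
      · rcases hcp with h | h
        · exact h.2
        · exact absurd h0 (Gm.not_V0_of_V1 h.1)
      · rcases hcp with h | h
        · exact absurd h.1 (Gm.not_V0_of_V1 h1)
        · exact h.2
    · obtain ⟨hQ, h0, h1⟩ := hτ1 (rank v) v (hrank v hv) hin
      exact ⟨hQ, fun h => ⟨(h0 h).1, haU _ (h0 h).2⟩, fun h w hw => haU _ (h1 h w hw)⟩
  · intro π hf hE hin hσ
    dsimp only at hσ
    by_cases hG : ∃ᶠ i in atTop, π i ∈ Gs
    · exact Or.inl hG
    right
    obtain ⟨M, hM⟩ : ∃ M, ∀ v, rank v ≤ M := by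
      obtain ⟨M, hM⟩ := (Set.finite_range rank).bddAbove
      exact ⟨M, fun v => hM ⟨v, rfl⟩⟩
    obtain ⟨m, hm1, hm2⟩ := liminf_nat (fun i => rank (π i)) M fun i => hM _
    have hev : ∀ᶠ i in atTop, ¬ (rank (π i) = m ∧ π i ∈ Gm.accN Q acc Gs U (a m)) := by
      rw [← not_frequently]
      intro hfr
      obtain ⟨v, ⟨hvm, hva⟩, hvf⟩ :=
        pigeon π (fun v => rank v = m ∧ v ∈ Gm.accN Q acc Gs U (a m)) hfr
      have hvacc : v ∉ acc := by
        obtain ⟨i, hi⟩ := hvf.exists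
        rw [← hi]; exact (hin i).2
      have hvG : v ∉ Gs := fun h => hG (hvf.mono fun i hi => by rw [hi]; exact h)
      have hva' : v ∈ Gm.apre U (a m) := by
        rcases hva with h | ⟨_, h | h⟩
        · exact absurd h hvacc
        · exact absurd h.1 hvG
        · exact h
      have hnext : ∃ᶠ i in atTop, π (i + 1) ∈ a m := by
        rcases hva' with (⟨h0, h⟩ | ⟨h1, h⟩) | ⟨⟨w, hw, hwa⟩, _⟩
        · refine hvf.mono fun i hi => ?_
          rw [hσ i (by rw [hi]; exact h0), hi, hvm, if_pos hva]
          have := (hc1 v (by rw [hvm]; exact h)).2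
          rwa [hvm] at this
        · refine hvf.mono fun i hi => ?_
          have := hE i
          rw [hi] at this
          exact h _ this
        · refine ((Gm.fair_iff π).1 hf v w hw hvf).mono fun i hi => ?_
          rw [hi.2]; exact hwa
      rw [freq_shift (P := fun i => π i ∈ a m) 1] at hnext
      obtain ⟨i, hi, hi'⟩ := (hnext.and_eventually hm2).exists
      have := hlt _ _ hi
      omega
    obtain ⟨N, hN⟩ := eventually_atTop.1 (hev.and hm2)
    obtain ⟨t, ht, htm⟩ := frequently_atTop.1 hm1 N
    have hall : ∀ i, rank (π (i + t)) = m := by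
      intro i
      induction i with
      | zero => simpa using htm
      | succ i ihi =>
        have hnot : π (i + t) ∉ Gm.accN Q acc Gs U (a m) := fun h =>
          (hN (i + t) (by omega)).1 ⟨ihi, h⟩
        have hmem := hrank _ (hin (i + t)).1
        rw [ihi] at hmem
        obtain ⟨_, h0, h1⟩ := hτ1 m _ hmem hnot
        have hnx : π (i + t + 1) ∈ a (m + 1) := by
          rcases Gm.V0_or_V1 (π (i + t)) with h | h
          · rw [hσ _ h, ihi, if_neg hnot]; exact (h0 h).2
          · exact h1 h _ (hE _)
        have h5 := hlt _ _ hnx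
        have h6 := (hN (i + t + 1) (by omega)).2
        have e : i + 1 + t = i + t + 1 := by omega
        rw [e]; omega
    have hnot : ∀ i, π (i + t) ∉ Gm.accN Q acc Gs U (a m) := fun i h =>
      (hN (i + t) (by omega)).1 ⟨hall i, h⟩
    have := hτ2 m (fun i => π (i + t)) ((Gm.fair_shift π t).2 hf)
      (fun i => by
        have := hE (i + t)
        have e : i + 1 + t = i + t + 1 := by omega
        rwa [e])
      (fun i => ⟨by
        have := hrank _ (hin (i + t)).1
        rwa [hall] at this, hnot i⟩)
      (fun i h => by
        have e : i + 1 + t = i + t + 1 := by omega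
        rw [e, hσ _ h, hall, if_neg (hnot i)])
    exact (Rab_shift Gp Rp avail π t).1 this

theorem sound_aux [Finite V] (Gm : LiveGameGraph V) (Gp Rp : ℕ → Set V) (n : ℕ) :
    ∀ (avail : Finset ℕ) (Q acc : Set V), Gm.Snd (Gm.rabinAux Gp Rp n avail Q acc) acc Q
      (Rab Gp Rp avail) := by
  induction n with
  | zero =>
    intro avail Q acc
    refine ⟨id, fun v hv h => absurd hv h, fun π _ _ h _ => absurd (h 0).1 (h 0).2⟩
  | succ n ih =>
    intro avail Q acc
    exact Gm.aux_of_lvl Gp Rp n (Gm.lvl_of_aux Gp Rp n ih) avail Q acc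

theorem rabinZ_eq (Gm : LiveGameGraph V) (Gp Rp : ℕ → Set V) (k : ℕ) :
    Gm.rabinZ Gp Rp k = Gm.lvl Gp Rp k (Finset.Icc 1 k) Set.univ ∅ ∅ := by
  unfold rabinZ lvl accN
  simp only [Set.compl_empty, Set.empty_union]

theorem Rab_iff (Gp Rp : ℕ → Set V) (k : ℕ) :
    (fun π : ℕ → V => ∃ j ∈ Finset.Icc 1 k,
          (∃ N, ∀ i ≥ N, π i ∉ Rp j) ∧ (∀ N, ∃ i ≥ N, π i ∈ Gp j)) =
      Rab Gp Rp (Finset.Icc 1 k) := by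
  funext π
  unfold Rab
  simp only [eventually_atTop, frequently_atTop]

end LiveGameGraph

/-- the permutation-based Rabin fixpoint equals the winning region
of Player 0 in the fair adversarial Rabin game, and a memoryless winning
Player-0 strategy exists on it. -/
theorem fair_adversarial_rabin {V : Type*} [Fintype V]
    (Gm : LiveGameGraph V) (k : ℕ) (Gp Rp : ℕ → Set V) (Zstar : Set V)
    (hZ : Zstar = Gm.rabinZ Gp Rp k) :
    Zstar = Gm.WinningRegion
        (fun π => ∃ j ∈ Finset.Icc 1 k,
          (∃ N, ∀ i ≥ N, π i ∉ Rp j) ∧ (∀ N, ∃ i ≥ N, π i ∈ Gp j)) ∧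
    ∃ σ : V → V, (∀ v ∈ Gm.V0, Gm.E v (σ v)) ∧
      ∀ v0 ∈ Zstar,
        Gm.WinsFrom
          (fun π => ∃ j ∈ Finset.Icc 1 k,
            (∃ N, ∀ i ≥ N, π i ∉ Rp j) ∧ (∀ N, ∃ i ≥ N, π i ∈ Gp j))
          (fun _ v => σ v) v0 := by
  classical
  rw [LiveGameGraph.Rab_iff, hZ, LiveGameGraph.rabinZ_eq]
  clear hZ Zstar
  obtain ⟨τ, hτ1, hτ2⟩ := Gm.lvl_of_aux Gp Rp k (Gm.sound_aux Gp Rp k) (Finset.Icc 1 k)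
    Set.univ ∅ ∅
  set Z := Gm.lvl Gp Rp k (Finset.Icc 1 k) Set.univ ∅ ∅ with hZ
  choose s hs using Gm.succ_nonempty
  have key : ∃ σ : V → V, (∀ v ∈ Gm.V0, Gm.E v (σ v)) ∧
      ∀ v0 ∈ Z, Gm.WinsFrom (LiveGameGraph.Rab Gp Rp (Finset.Icc 1 k)) (fun _ v => σ v) v0 := by
    have hE : ∀ v ∈ Gm.V0, Gm.E v (if v ∈ Z then τ v else s v) := by
      intro v hv
      split_ifs with h
      · exact ((hτ1 v h (Set.notMem_empty v)).2.1 hv).1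
      · exact hs v
    refine ⟨fun v => if v ∈ Z then τ v else s v, hE, fun v0 hv0 => ?_⟩
    rw [LiveGameGraph.winsFrom_iff]
    refine ⟨fun _ v hv => hE v hv, fun π h0 hst hf => ?_⟩
    have hst2 : ∀ i, π i ∈ Gm.V0 → π (i + 1) = if π i ∈ Z then τ (π i) else s (π i) :=
      fun i => (hst i).2
    have hin : ∀ i, π i ∈ Z := by
      intro i
      induction i with
      | zero => rw [h0]; exact hv0
      | succ i ih =>
        obtain ⟨_, h1, h2⟩ := hτ1 _ ih (Set.notMem_empty _)
        rcases Gm.V0_or_V1 (π i) with h | h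
        · rw [hst2 i h, if_pos ih]; exact (h1 h).2
        · exact h2 h _ (hst i).1
    rcases hτ2 π hf (fun i => (hst i).1) (fun i => ⟨hin i, Set.notMem_empty _⟩)
      (fun i h => by rw [hst2 i h, if_pos (hin i)]) with h | h
    · obtain ⟨i, hi⟩ := h.exists
      exact absurd hi (Set.notMem_empty _)
    · exact h
  refine ⟨Set.Subset.antisymm ?_ ?_, key⟩
  · intro v hv
    obtain ⟨σ, _, h⟩ := key
    exact ⟨_, h v hv⟩
  · rintro v ⟨ρ, hρ⟩
    rw [LiveGameGraph.winsFrom_iff] at hρ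
    refine Gm.complete Gp Rp k _ _ _ _ (by simp) v ρ ⟨hρ.1, fun π h0 hst hf => ?_⟩
    exact Or.inr ⟨fun _ => trivial, Or.inr (hρ.2 π h0 hst hf)⟩
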